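/- Let a and b be unroll trees of FDDS admitting periodic patterns of sizes p_a and p_b respectively, and let n ≥ 2·max(p_a, p_b) + max(depth(a), depth(b)). Then a = b (as rooted trees up to isomorphism) if and only if a|_n = b|_n. -/

import Mathlib

noncomputable section

/-- A rooted tree (finite or infinite), presented by its levels: `level n` is the
set of vertices of depth `n` (finitely many at each depth), every vertex of depth
`n+1` has a parent of depth `n` (edges are directed towards the root), and there
is a unique vertex of depth `0`, the root. -/
structure RTree : Type 1 where
  level : ℕ → Type
  parent : ∀ n, level (n + 1) → level n
  fin : ∀ n, Fintype (level n)
  root : level 0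
  root_unique : ∀ x : level 0, x = root

namespace RTree

/-- Isomorphism of rooted trees: a depth-preserving bijection of the vertices
commuting with the parent maps (hence root- and edge-preserving). -/
def Iso (t s : RTree) : Prop :=
  ∃ e : ∀ n, t.level n ≃ s.level n,
    ∀ (n : ℕ) (x : t.level (n + 1)), e n (t.parent n x) = s.parent n (e (n + 1) x)

/-- The (layer-by-layer direct) product of two rooted trees. -/
def tprod (t s : RTree) : RTree where
  level n := t.level n × s.level n
  parent n x := (t.parent n x.1, s.parent n x.2)
  fin n := by haveI := t.fin n; haveI := s.fin n; infer_instance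
  root := (t.root, s.root)
  root_unique x := by
    obtain ⟨a, b⟩ := x
    rw [t.root_unique a, s.root_unique b]

/-- The cut of a tree at depth `n`: the subtree induced on vertices of depth `≤ n`. -/
def tcut (t : RTree) (n : ℕ) : RTree where
  level k := PLift (k ≤ n) × t.level k
  parent k x := (⟨Nat.le_of_succ_le x.1.down⟩, t.parent k x.2)
  fin k := by
    haveI := t.fin k
    haveI : Finite (PLift (k ≤ n)) := Finite.of_subsingleton
    exact Fintype.ofFinite _
  root := (⟨Nat.zero_le n⟩, t.root)
  root_unique x := by
    obtain ⟨a, b⟩ := x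
    rw [t.root_unique b]

/-- A tree is finite when it has no vertices below some depth. -/
def IsFinite (t : RTree) : Prop := ∃ N, ∀ k, N ≤ k → IsEmpty (t.level k)

/-- The depth of a (finite) tree: the largest depth of one of its vertices. -/
def depth (t : RTree) : ℕ := sSup {n | Nonempty (t.level n)}

/-- `tpow t k` is the `k`-fold product `t^k` of the tree `t` with itself (for `k ≥ 1`). -/
def tpow (t : RTree) : ℕ → RTree
  | 0 => t
  | 1 => t
  | n + 2 => tprod t (tpow t (n + 1))

/-- Iterated parent map, sending a vertex of depth `k+1` to its ancestor of depth 1. -/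
def down (t : RTree) : ∀ k, t.level (k + 1) → t.level 1
  | 0, x => x
  | k + 1, x => t.down k (t.parent (k + 1) x)

/-- The subtree of `t` rooted at the depth-1 vertex `v` (a child of the root). -/
def subtreeAt (t : RTree) (v : t.level 1) : RTree where
  level k := { x : t.level (k + 1) // t.down k x = v }
  parent k x := ⟨t.parent (k + 1) x.1, x.2⟩
  fin k := by haveI := t.fin (k + 1); exact Fintype.ofFinite _
  root := ⟨v, rfl⟩
  root_unique x := Subtype.ext x.2

/-- `D t`: the forest (here, a list) of the subtrees of `t` rooted at the
children of the root. -/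
def D (t : RTree) : List RTree := (@Finset.univ _ (t.fin 1)).toList.map t.subtreeAt

end RTree

/-- A forest is a finite multiset of rooted trees; we represent it by a list of
(concrete) trees, equality of forests being `ForestEq` below. -/
abbrev Forest := List RTree

/-- Equality of forests as multisets of isomorphism classes of rooted trees. -/
def ForestEq (F G : Forest) : Prop := Multiset.Rel RTree.Iso (↑F) (↑G)

/-- `F` is a sub-multiset of `G` up to isomorphism of rooted trees. -/
def ForestLe (F G : Forest) : Prop :=
  ∃ H : Multiset RTree, H ≤ (↑G : Multiset RTree) ∧ Multiset.Rel RTree.Iso (↑F) H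

/-- The product of two forests: the multiset of pairwise products. -/
def fprod (F G : Forest) : Forest := (F.map fun t => G.map fun s => t.tprod s).flatten

/-- The cut of a forest at depth `n`. -/
def fcut (F : Forest) (n : ℕ) : Forest := F.map (RTree.tcut · n)

/-- The depth of a forest: maximum of the depths of its trees. -/
def fdepth (F : Forest) : ℕ := (F.map RTree.depth).foldr max 0

/-- `fpow F k` is the `k`-fold product `F^k` of the forest `F` with itself (for `k ≥ 1`). -/
def fpow (F : Forest) : ℕ → Forest
  | 0 => F
  | 1 => F
  | n + 2 => fprod F (fpow F (n + 1))

/-- `D` of a forest: the multiset union of the `D` of its trees. -/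
def fD (F : Forest) : Forest := (F.map RTree.D).flatten

/-- `R F`: the rooted tree obtained by attaching each tree of the forest `F`
as a child subtree of a new common root, so that `D (R F) = F`. -/
def rollRoot (F : Forest) : RTree where
  level k :=
    match k with
    | 0 => PUnit
    | k + 1 => Σ i : Fin F.length, (F.get i).level k
  parent k :=
    match k with
    | 0 => fun _ => PUnit.unit
    | k + 1 => fun x => ⟨x.1, (F.get x.1).parent k x.2⟩
  fin k := by
    match k with
    | 0 => exact inferInstanceAs (Fintype PUnit)
    | k + 1 =>
      haveI : ∀ i : Fin F.length, Fintype ((F.get i).level k) := fun i => (F.get i).fin k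
      exact inferInstanceAs (Fintype (Σ i : Fin F.length, (F.get i).level k))
  root := PUnit.unit
  root_unique _ := rfl

/-- The number of vertices of depth `d` in a forest. -/
def levelCard (F : Forest) (d : ℕ) : ℕ := (F.map fun t => @Fintype.card _ (t.fin d)).sum

/-- The total number of vertices of a (finite) forest. -/
def totalCard (F : Forest) : ℕ := ∑ d ∈ Finset.range (fdepth F + 1), levelCard F d

/-- A finite discrete-time dynamical system: a finite set of states together
with a transition function. -/
structure FDDS : Type 1 where
  S : Type
  fin : Fintype S
  f : S → S

namespace FDDS

/-- A state is periodic when some positive iterate of the transition function fixes it. -/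
def Periodic (A : FDDS) (u : A.S) : Prop := ∃ p, 1 ≤ p ∧ A.f^[p] u = u

/-- The least `k` such that `f^[k] s` is periodic. -/
def depthOf (A : FDDS) (s : A.S) : ℕ := sInf {k | A.Periodic (A.f^[k] s)}

/-- The depth of an FDDS: the maximum over states `s` of the least `k` such
that `f^[k] s` is periodic. -/
def depth (A : FDDS) : ℕ := sSup {d | ∃ s : A.S, d = A.depthOf s}

/-- The functional digraph of `A` has a single (weakly) connected component. -/
def Connected (A : FDDS) : Prop := ∀ s s' : A.S, ∃ k l, A.f^[k] s = A.f^[l] s'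

/-- The unroll tree of `A` in the state `u`: vertices of depth `k` are the
`k`-th preimages of `u`, the parent of `(v,k+1)` being `(f v, k)`. -/
def unrollTree (A : FDDS) (u : A.S) : RTree where
  level k := { s : A.S // A.f^[k] s = u }
  parent k x := ⟨A.f x.1, by rw [← Function.iterate_succ_apply]; exact x.2⟩
  fin k := by haveI := A.fin; exact Fintype.ofFinite _
  root := ⟨u, rfl⟩
  root_unique x := Subtype.ext x.2

/-- The unroll of `A`: the multiset of the unroll trees of `A` in its periodic states. -/
def unroll (A : FDDS) : Forest :=
  haveI := A.fin
  letI : DecidablePred A.Periodic := Classical.decPred _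
  (Finset.univ.filter A.Periodic).toList.map A.unrollTree

/-- The minimal period of a periodic state. -/
def minPeriod (A : FDDS) (u : A.S) : ℕ := sInf {p | 1 ≤ p ∧ A.f^[p] u = u}

/-- The periodic state `w` with `f^[i] w = u`: the `i`-th "shift" of `u`
backwards along its cycle. -/
def shiftState (A : FDDS) (u : A.S) (i : ℕ) : A.S := A.f^[i * (A.minPeriod u - 1)] u

/-- The shift `σ^i(t)` of the unroll tree `t = unrollTree A u`: the unroll tree
rooted at the depth-`i` vertex of the infinite branch of `t`. -/
def shiftTree (A : FDDS) (u : A.S) (i : ℕ) : RTree := A.unrollTree (A.shiftState u i)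

/-- The unroll tree of `A` in `u` admits a periodic pattern of size `p ≥ 1`,
i.e. `σ^p(t_u) = t_u`. -/
def PatternSize (A : FDDS) (u : A.S) (p : ℕ) : Prop :=
  1 ≤ p ∧ RTree.Iso (A.shiftTree u p) (A.unrollTree u)

/-- `|Shift(t_u)|`: the smallest size of a periodic pattern of the unroll tree of `A` in `u`. -/
def shiftCount (A : FDDS) (u : A.S) : ℕ := sInf {p | A.PatternSize u p}

end FDDS

/-- A rooted tree is an unroll tree when it is isomorphic to the unroll tree of
some FDDS in one of its periodic states. -/
def IsUnrollTree (x : RTree) : Prop :=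
  ∃ (A : FDDS) (u : A.S), A.Periodic u ∧ RTree.Iso x (A.unrollTree u)

end

/-!
Call a vertex of the infinite branch of an unroll tree a branch vertex. If `m` is at least the depth
of the system, the branch is visible in cuts: among the children of a branch vertex, exactly one has
a subtree reaching depth `m`. Hence `t|_(m+1)` determines `σ(t)|_m`, and the two cuts `t|_(m+1)`
and `σ(t)|_(m+1)` determine `t|_(m+2)`.

Let `d` be the larger of the two depths. By the first fact `a|_n = b|_n` gives
`σ^k(a)|_(d+1) = σ^k(b)|_(d+1)` for all `k < p_a + p_b - gcd(p_a, p_b)`. As sequences in `k` these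
cuts have periods `p_a` and `p_b`, so by the Fine–Wilf theorem they agree for every `k`. By the
second fact the agreement of all shifts at depth `d + 1` propagates to every depth, and locally
finite trees with isomorphic cuts are isomorphic by compactness.
-/

namespace RTree

variable {t s r : RTree} {n : ℕ}

theorem Iso.refl (t : RTree) : Iso t t :=
  ⟨fun _ => Equiv.refl _, fun _ _ => rfl⟩

theorem Iso.symm (h : Iso t s) : Iso s t := by
  obtain ⟨e, he⟩ := h
  refine ⟨fun k => (e k).symm, fun k y => (e k).injective ?_⟩
  rw [he, Equiv.apply_symm_apply, Equiv.apply_symm_apply]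

theorem Iso.trans (h : Iso t s) (h' : Iso s r) : Iso t r := by
  obtain ⟨e, he⟩ := h
  obtain ⟨e', he'⟩ := h'
  exact ⟨fun k => (e k).trans (e' k), fun k x => by simp only [Equiv.trans_apply, he, he']⟩

theorem down_equiv {e : ∀ k, t.level k ≃ s.level k}
    (he : ∀ k x, e k (t.parent k x) = s.parent k (e (k + 1) x)) (k : ℕ) (x : t.level (k + 1)) :
    s.down k (e (k + 1) x) = e 1 (t.down k x) := by
  induction k with
  | zero => rfl
  | succ k ih => simp only [down, ← he, ih]

theorem iso_iff_exists_subtreeAt :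
    Iso t s ↔ ∃ σ : t.level 1 ≃ s.level 1, ∀ v, Iso (t.subtreeAt v) (s.subtreeAt (σ v)) := by
  constructor
  · rintro ⟨e, he⟩
    refine ⟨e 1, fun v => ⟨fun k => (e (k + 1)).subtypeEquiv fun x => ?_,
      fun k x => Subtype.ext (he (k + 1) x.1)⟩⟩
    rw [down_equiv he, (e 1).apply_eq_iff_eq]
  · rintro ⟨σ, h⟩
    choose E hE using h
    let rootEquiv : t.level 0 ≃ s.level 0 :=
      ⟨fun _ => s.root, fun _ => t.root, fun x => (t.root_unique x).symm,
        fun y => (s.root_unique y).symm⟩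
    let levelEquiv (k : ℕ) : t.level (k + 1) ≃ s.level (k + 1) :=
      (Equiv.sigmaFiberEquiv (t.down k)).symm.trans
        ((σ.sigmaCongr fun v => E v k).trans (Equiv.sigmaFiberEquiv (s.down k)))
    refine ⟨fun | 0 => rootEquiv | k + 1 => levelEquiv k, fun k x => ?_⟩
    cases k with
    | zero => rw [s.root_unique (s.parent 0 _)]; rfl
    | succ k => exact congrArg Subtype.val (hE (t.down (k + 1) x) k ⟨x, rfl⟩)

/-- `CutIso n t s` is the equality `t|_n = s|_n` of the cuts at depth `n`, up to isomorphism. -/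
def CutIso (n : ℕ) (t s : RTree) : Prop := Iso (t.tcut n) (s.tcut n)

/-- Equality of the cuts at depth `n` as an equivalence relation; its quotient turns sequences of
trees known up to depth `n` into infinite words. -/
def cutSetoid (n : ℕ) : Setoid RTree where
  r := CutIso n
  iseqv := ⟨fun t => Iso.refl (t.tcut n), Iso.symm, Iso.trans⟩

theorem Iso.cutIso (h : Iso t s) (n : ℕ) : CutIso n t s := by
  obtain ⟨e, he⟩ := h
  exact ⟨fun k => Equiv.prodCongr (Equiv.refl _) (e k), fun k x => Prod.ext rfl (he k x.2)⟩

/-- The vertices of depth `k ≤ n` of the cut of `t` at depth `n`, seen as vertices of `t`. -/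
def tcutLevelEquiv (t : RTree) {n k : ℕ} (hk : k ≤ n) : (t.tcut n).level k ≃ t.level k where
  toFun x := x.2
  invFun x := (⟨hk⟩, x)

theorem cutIso_iff_exists_levelEquiv :
    CutIso n t s ↔
      ∃ e : ∀ k ≤ n, t.level k ≃ s.level k, ∀ (k : ℕ) (hk : k + 1 ≤ n) (x : t.level (k + 1)),
        e k (Nat.le_of_succ_le hk) (t.parent k x) = s.parent k (e (k + 1) hk x) := by
  constructor
  · rintro ⟨e, he⟩
    exact ⟨fun k hk => (t.tcutLevelEquiv hk).symm.trans ((e k).trans (s.tcutLevelEquiv hk)),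
      fun k hk x => congrArg Prod.snd (he k ((t.tcutLevelEquiv hk).symm x))⟩
  · rintro ⟨e, he⟩
    exact ⟨fun k =>
      { toFun := fun x => (x.1, e k x.1.down x.2)
        invFun := fun y => (y.1, (e k y.1.down).symm y.2)
        left_inv := fun x => Prod.ext rfl ((e k x.1.down).symm_apply_apply x.2)
        right_inv := fun y => Prod.ext rfl ((e k y.1.down).apply_symm_apply y.2) },
      fun k x => Prod.ext rfl (he k x.1.down x.2)⟩

theorem CutIso.mono {m : ℕ} (h : CutIso n t s) (hmn : m ≤ n) : CutIso m t s := by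
  obtain ⟨e, he⟩ := cutIso_iff_exists_levelEquiv.1 h
  exact cutIso_iff_exists_levelEquiv.2
    ⟨fun k hk => e k (hk.trans hmn), fun k hk x => he k (hk.trans hmn) x⟩

theorem CutIso.nonempty_level_iff (h : CutIso n t s) :
    Nonempty (t.level n) ↔ Nonempty (s.level n) := by
  obtain ⟨e, -⟩ := cutIso_iff_exists_levelEquiv.1 h
  exact (e n le_rfl).nonempty_congr

theorem down_tcut_snd (k : ℕ) (x : (t.tcut n).level (k + 1)) :
    ((t.tcut n).down k x).2 = t.down k x.2 := by
  induction k with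
  | zero => rfl
  | succ k ih => exact ih _

theorem subtreeAt_tcut_succ (v : (t.tcut (n + 1)).level 1) :
    Iso ((t.tcut (n + 1)).subtreeAt v) ((t.subtreeAt v.2).tcut n) :=
  ⟨fun _ =>
    { toFun := fun x => (⟨Nat.le_of_succ_le_succ x.1.1.down⟩,
        ⟨x.1.2, by rw [← down_tcut_snd, x.2]⟩)
      invFun := fun y => ⟨(⟨Nat.succ_le_succ y.1.down⟩, y.2.1),
        Prod.ext (Subsingleton.elim _ _) ((down_tcut_snd _ _).trans y.2.2)⟩ },
    fun _ _ => rfl⟩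

theorem cutIso_succ_iff :
    CutIso (n + 1) t s ↔
      ∃ σ : t.level 1 ≃ s.level 1, ∀ v, CutIso n (t.subtreeAt v) (s.subtreeAt (σ v)) := by
  let φ (t : RTree) := t.tcutLevelEquiv (Nat.le_add_left 1 n)
  have hφ (t : RTree) (v : t.level 1) := subtreeAt_tcut_succ (n := n) ((φ t).symm v)
  refine iso_iff_exists_subtreeAt.trans ⟨fun ⟨σ, h⟩ => ?_, fun ⟨σ, h⟩ => ?_⟩
  · exact ⟨(φ t).symm.trans (σ.trans (φ s)), fun v =>
      (hφ t v).symm.trans ((h _).trans (subtreeAt_tcut_succ _))⟩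
  · exact ⟨(φ t).trans (σ.trans (φ s).symm), fun v =>
      (subtreeAt_tcut_succ v).trans ((h _).trans (hφ s _).symm)⟩

theorem CutIso.succ_of_isEmpty_level (h : CutIso n t s) (ht : IsEmpty (t.level n)) :
    CutIso (n + 1) t s := by
  induction n generalizing t s with
  | zero => exact ht.elim t.root
  | succ n ih =>
    obtain ⟨σ, hσ⟩ := cutIso_succ_iff.1 h
    exact cutIso_succ_iff.2 ⟨σ, fun v => ih (hσ v) ⟨fun x => ht.false x.1⟩⟩

-- Compactness: the families of bijections between corresponding levels form a product of finite
-- discrete spaces, in which the condition of respecting parents above depth `n` is closed.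
theorem iso_of_forall_cutIso (h : ∀ n, CutIso n t s) : Iso t s := by
  let C (n : ℕ) : Set (∀ k, t.level k ≃ s.level k) :=
    {e | ∀ k < n, ∀ x, e k (t.parent k x) = s.parent k (e (k + 1) x)}
  have nonempty_C (n : ℕ) : (C n).Nonempty := by
    choose e he using fun n => cutIso_iff_exists_levelEquiv.1 (h n)
    refine ⟨fun k => if hk : k ≤ n then e n k hk else e k k le_rfl, fun k hk x => ?_⟩
    simpa only [dif_pos hk.le, dif_pos (Nat.succ_le_of_lt hk)] using he n k hk x
  let (k : ℕ) : TopologicalSpace (t.level k ≃ s.level k) := ⊥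
  have (k : ℕ) : DiscreteTopology (t.level k ≃ s.level k) := ⟨rfl⟩
  have (k : ℕ) : Finite (t.level k) := (t.fin k).finite
  have (k : ℕ) : Finite (s.level k) := (s.fin k).finite
  have isClosed_C (n : ℕ) : IsClosed (C n) := by
    simp only [C, Set.ofPred_forall]
    refine isClosed_biInter fun k _ => isClosed_iInter fun x => ?_
    let respects : Set ((t.level k ≃ s.level k) × (t.level (k + 1) ≃ s.level (k + 1))) :=
      {σ | σ.1 (t.parent k x) = s.parent k (σ.2 x)}
    have continuous_pair : Continuous fun e : ∀ k, t.level k ≃ s.level k => (e k, e (k + 1)) :=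
      (continuous_apply k).prodMk (continuous_apply (k + 1))
    exact (isClosed_discrete respects).preimage continuous_pair
  obtain ⟨e, he⟩ := IsCompact.nonempty_iInter_of_sequence_nonempty_isCompact_isClosed C
    (fun n e he k hk => he k (hk.trans n.lt_succ_self)) nonempty_C (isClosed_C 0).isCompact
    isClosed_C
  exact ⟨e, fun k => Set.mem_iInter.1 he (k + 1) k k.lt_succ_self⟩

end RTree

theorem exists_iterate_mem_periodicPts {α : Type*} [Finite α] (f : α → α) (x : α) :
    ∃ k, f^[k] x ∈ Function.periodicPts f := by
  obtain ⟨i, j, hij, e⟩ := Finite.exists_ne_map_eq_of_infinite fun k => f^[k] x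
  wlog hlt : i < j generalizing i j
  · exact this j i hij.symm e.symm (hij.symm.lt_of_le (not_lt.1 hlt))
  refine ⟨i, Function.mk_mem_periodicPts (Nat.sub_pos_of_lt hlt) ?_⟩
  rw [Function.IsPeriodicPt, Function.IsFixedPt, ← Function.iterate_add_apply,
    Nat.sub_add_cancel hlt.le]
  exact e.symm

namespace FDDS

open Function RTree

variable {A B : FDDS}

theorem Periodic.iterate {u : A.S} (hu : A.Periodic u) (k : ℕ) : A.Periodic (A.f^[k] u) :=
  (bijOn_periodicPts A.f).mapsTo.iterate k hu

theorem Periodic.eq_of_f_eq {u v : A.S} (hu : A.Periodic u) (hv : A.Periodic v)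
    (h : A.f u = A.f v) : u = v :=
  (bijOn_periodicPts A.f).injOn hu hv h

theorem depthOf_le_depth (s : A.S) : A.depthOf s ≤ A.depth := by
  have := A.fin
  have h : {d | ∃ s : A.S, d = A.depthOf s} = Set.range A.depthOf := by
    ext d
    simp only [Set.mem_ofPred_eq, Set.mem_range, eq_comm]
  exact le_csSup (h ▸ (Set.finite_range _).bddAbove) ⟨s, rfl⟩

theorem periodic_iterate_of_depth_le {m : ℕ} (hm : A.depth ≤ m) (s : A.S) :
    A.Periodic (A.f^[m] s) := by
  have := A.fin
  have h : A.Periodic (A.f^[A.depthOf s] s) := Nat.sInf_mem (exists_iterate_mem_periodicPts A.f s)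
  have := h.iterate (m - A.depthOf s)
  rwa [← iterate_add_apply, Nat.sub_add_cancel ((depthOf_le_depth s).trans hm)] at this

theorem nonempty_level_unrollTree_iff {m : ℕ} (hm : A.depth ≤ m) {s : A.S} :
    Nonempty ((A.unrollTree s).level m) ↔ A.Periodic s := by
  constructor
  · rintro ⟨y, rfl⟩
    exact periodic_iterate_of_depth_le hm y
  · intro hs
    obtain ⟨y, -, hy⟩ := (bijOn_periodicPts A.f).surjOn.iterate m hs
    exact ⟨⟨y, hy⟩⟩

theorem down_unrollTree_val {u : A.S} (k : ℕ) (x : (A.unrollTree u).level (k + 1)) :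
    ((A.unrollTree u).down k x).1 = A.f^[k] x.1 := by
  induction k with
  | zero => rfl
  | succ k ih => exact ih _

theorem subtreeAt_unrollTree {u : A.S} (v : (A.unrollTree u).level 1) :
    Iso ((A.unrollTree u).subtreeAt v) (A.unrollTree v.1) :=
  ⟨fun k =>
    { toFun := fun x => ⟨x.1.1, by rw [← down_unrollTree_val, x.2]⟩
      invFun := fun y => ⟨⟨y.1, by rw [iterate_succ_apply', y.2]; exact v.2⟩,
        Subtype.ext ((down_unrollTree_val k _).trans y.2)⟩ },
    fun _ _ => rfl⟩

theorem cutIso_unrollTree_succ_iff {n : ℕ} {u : A.S} {v : B.S} :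
    CutIso (n + 1) (A.unrollTree u) (B.unrollTree v) ↔
      ∃ σ : {s // A.f s = u} ≃ {s // B.f s = v},
        ∀ s, CutIso n (A.unrollTree s.1) (B.unrollTree (σ s).1) := by
  refine cutIso_succ_iff.trans (exists_congr fun σ => forall_congr' fun s => ?_)
  have hA := (subtreeAt_unrollTree s).cutIso n
  have hB := (subtreeAt_unrollTree (σ s)).cutIso n
  exact ⟨fun h => (hA.symm.trans h).trans hB, fun h => (hA.trans h).trans hB.symm⟩

theorem periodic_iff_of_cutIso {m : ℕ} (hA : A.depth ≤ m) (hB : B.depth ≤ m) {s : A.S} {s' : B.S}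
    (h : CutIso m (A.unrollTree s) (B.unrollTree s')) : A.Periodic s ↔ B.Periodic s' := by
  rw [← nonempty_level_unrollTree_iff hA, h.nonempty_level_iff, nonempty_level_unrollTree_iff hB]

theorem cutIso_of_cutIso_succ_f {m : ℕ} (hA : A.depth ≤ m) (hB : B.depth ≤ m) {u : A.S} {v : B.S}
    (hu : A.Periodic u) (hv : B.Periodic v)
    (h : CutIso (m + 1) (A.unrollTree (A.f u)) (B.unrollTree (B.f v))) :
    CutIso m (A.unrollTree u) (B.unrollTree v) := by
  obtain ⟨σ, hσ⟩ := cutIso_unrollTree_succ_iff.1 h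
  have hσu := hσ ⟨u, rfl⟩
  rwa [((periodic_iff_of_cutIso hA hB hσu).1 hu).eq_of_f_eq hv (σ ⟨u, rfl⟩).2] at hσu

theorem cutIso_succ_succ_f {m : ℕ} (hA : A.depth ≤ m) (hB : B.depth ≤ m) {u : A.S} {v : B.S}
    (hu : A.Periodic u) (hv : B.Periodic v)
    (h : CutIso (m + 1) (A.unrollTree (A.f u)) (B.unrollTree (B.f v)))
    (huv : CutIso (m + 1) (A.unrollTree u) (B.unrollTree v)) :
    CutIso (m + 2) (A.unrollTree (A.f u)) (B.unrollTree (B.f v)) := by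
  obtain ⟨σ, hσ⟩ := cutIso_unrollTree_succ_iff.1 h
  refine cutIso_unrollTree_succ_iff.2 ⟨σ, fun s => ?_⟩
  by_cases hs : A.Periodic s.1
  · have hσs : B.Periodic (σ s).1 := (periodic_iff_of_cutIso hA hB (hσ s)).1 hs
    rwa [hs.eq_of_f_eq hu s.2, hσs.eq_of_f_eq hv (σ s).2]
  · rw [← nonempty_level_unrollTree_iff hA, not_nonempty_iff] at hs
    exact (hσ s).succ_of_isEmpty_level hs

theorem shiftTree_zero (u : A.S) : A.shiftTree u 0 = A.unrollTree u := by
  simp only [shiftTree, shiftState, zero_mul, iterate_zero, id_eq]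

theorem Periodic.shiftState {u : A.S} (hu : A.Periodic u) (i : ℕ) :
    A.Periodic (A.shiftState u i) :=
  hu.iterate _

theorem Periodic.f_shiftState_succ {u : A.S} (hu : A.Periodic u) (i : ℕ) :
    A.f (A.shiftState u (i + 1)) = A.shiftState u i := by
  obtain ⟨hpos, hp⟩ : 1 ≤ A.minPeriod u ∧ A.f^[A.minPeriod u] u = u := Nat.sInf_mem hu
  have h : (i + 1) * (A.minPeriod u - 1) + 1 = i * (A.minPeriod u - 1) + A.minPeriod u := by
    rw [add_mul, one_mul, add_assoc, Nat.sub_add_cancel hpos]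
  rw [FDDS.shiftState, FDDS.shiftState, ← iterate_succ_apply' A.f, Nat.succ_eq_add_one, h,
    iterate_add_apply, hp]

theorem cutIso_shiftTree_add {m : ℕ} (hA : A.depth ≤ m) (hB : B.depth ≤ m) {u : A.S} {v : B.S}
    (hu : A.Periodic u) (hv : B.Periodic v) {i j k : ℕ}
    (h : CutIso (m + k) (A.shiftTree u i) (B.shiftTree v j)) :
    CutIso m (A.shiftTree u (i + k)) (B.shiftTree v (j + k)) := by
  induction k generalizing i j with
  | zero => exact h
  | succ k ih =>
    rw [← add_assoc, shiftTree, shiftTree, ← hu.f_shiftState_succ, ← hv.f_shiftState_succ] at h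
    rw [← Nat.succ_add_eq_add_succ i, ← Nat.succ_add_eq_add_succ j]
    exact ih (cutIso_of_cutIso_succ_f (hA.trans (m.le_add_right k)) (hB.trans (m.le_add_right k))
      (hu.shiftState _) (hv.shiftState _) h)

theorem iso_of_forall_cutIso_shiftTree {m : ℕ} (hA : A.depth ≤ m) (hB : B.depth ≤ m) {u : A.S}
    {v : B.S} (hu : A.Periodic u) (hv : B.Periodic v)
    (h : ∀ k, CutIso (m + 1) (A.shiftTree u k) (B.shiftTree v k)) :
    Iso (A.unrollTree u) (B.unrollTree v) := by
  have forall_cutIso (l k : ℕ) : CutIso (m + l + 1) (A.shiftTree u k) (B.shiftTree v k) := by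
    induction l generalizing k with
    | zero => exact h k
    | succ l ih =>
      have ih₀ := ih k
      rw [shiftTree, shiftTree, ← hu.f_shiftState_succ, ← hv.f_shiftState_succ] at ih₀ ⊢
      exact cutIso_succ_succ_f (hA.trans (m.le_add_right l)) (hB.trans (m.le_add_right l))
        (hu.shiftState _) (hv.shiftState _) ih₀ (ih (k + 1))
  refine iso_of_forall_cutIso fun n => ?_
  rw [← shiftTree_zero u, ← shiftTree_zero v]
  exact (forall_cutIso n 0).mono (by lia)

theorem PatternSize.cutIso_shiftTree_add {u : A.S} {p : ℕ} (hp : A.PatternSize u p)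
    (hu : A.Periodic u) {m : ℕ} (hm : A.depth ≤ m) (k : ℕ) :
    CutIso m (A.shiftTree u (k + p)) (A.shiftTree u k) := by
  have h : Iso (A.shiftTree u p) (A.shiftTree u 0) := (shiftTree_zero u).symm ▸ hp.2
  simpa only [add_comm p, zero_add] using
    FDDS.cutIso_shiftTree_add hm hm hu hu (h.cutIso (m + k))

end FDDS

section Periodicity

variable {α : Type*} {a b : ℕ → α} {p q : ℕ}

theorem hasPeriod_map_range_iff {L : ℕ} :
    ((List.range L).map a).HasPeriod p ↔ ∀ i, i + p < L → a i = a (i + p) := by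
  simp only [List.hasPeriod_iff_getElem?, List.length_map, List.length_range, Nat.lt_sub_iff_add_lt]
  refine forall₂_congr fun i hi => ?_
  rw [List.getElem?_eq_getElem (by simp; lia), List.getElem?_eq_getElem (by simpa using hi)]
  simp only [List.getElem_map, List.getElem_range, Option.some_inj]

theorem apply_mod_gcd_of_forall_lt {L : ℕ} (hL : p + q - p.gcd q ≤ L)
    (hp : ∀ i, i + p < L → a i = a (i + p)) (hq : ∀ i, i + q < L → a i = a (i + q)) {i : ℕ}
    (hi : i < L) : a (i % p.gcd q) = a i := by
  have h := (hasPeriod_map_range_iff.2 hp).gcd (hasPeriod_map_range_iff.2 hq) (by simpa using hL)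
  have h_mod := h.getElem?_mod _ i _ (by simpa using hi)
  rw [List.getElem?_eq_getElem (by simpa using (Nat.mod_le _ _).trans_lt hi),
    List.getElem?_eq_getElem (by simpa using hi)] at h_mod
  simpa only [List.getElem_map, List.getElem_range, Option.some_inj] using h_mod

theorem eq_of_periodic_of_forall_lt (hp : 0 < p) (hq : 0 < q) (ha : Function.Periodic a p)
    (hb : Function.Periodic b q) (hab : ∀ k < p + q - p.gcd q, a k = b k) : a = b := by
  have a_mod {i : ℕ} (hi : i < p + q - p.gcd q) : a (i % p.gcd q) = a i :=
    apply_mod_gcd_of_forall_lt le_rfl (fun i _ => (ha i).symm)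
      (fun i hi => by rw [hab i (by lia), hab (i + q) hi, hb]) hi
  funext k
  have hkp : k % p < p + q - p.gcd q := by have := k.mod_lt hp; have := Nat.gcd_le_right p hq; lia
  have hkq : k % q < p + q - p.gcd q := by have := k.mod_lt hq; have := Nat.gcd_le_left q hp; lia
  calc
    a k = a (k % p) := (ha.map_mod_nat k).symm
    _ = a (k % p.gcd q) := by rw [← a_mod hkp, Nat.mod_mod_of_dvd _ (p.gcd_dvd_left q)]
    _ = a (k % q) := by rw [← a_mod hkq, Nat.mod_mod_of_dvd _ (p.gcd_dvd_right q)]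
    _ = b (k % q) := hab _ hkq
    _ = b k := hb.map_mod_nat k

end Periodicity

open FDDS RTree in
theorem stmt4_general (A B : FDDS) (ua : A.S) (hua : A.Periodic ua) (ub : B.S)
    (hub : B.Periodic ub) (pa pb : ℕ) (hpa : A.PatternSize ua pa) (hpb : B.PatternSize ub pb)
    (n : ℕ) (hn : pa + pb - pa.gcd pb + max A.depth B.depth ≤ n) :
    Iso (A.unrollTree ua) (B.unrollTree ub) ↔
      Iso ((A.unrollTree ua).tcut n) ((B.unrollTree ub).tcut n) := by
  refine ⟨fun h => h.cutIso n, fun h => ?_⟩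
  set d := max A.depth B.depth
  have hA : A.depth ≤ d := le_max_left _ _
  have hB : B.depth ≤ d := le_max_right _ _
  let cutClass (t : RTree) : Quotient (cutSetoid (d + 1)) := ⟦t⟧
  have eq_classes : cutClass ∘ A.shiftTree ua = cutClass ∘ B.shiftTree ub := by
    refine eq_of_periodic_of_forall_lt hpa.1 hpb.1
      (fun k => Quotient.sound (hpa.cutIso_shiftTree_add hua (hA.trans d.le_succ) k))
      (fun k => Quotient.sound (hpb.cutIso_shiftTree_add hub (hB.trans d.le_succ) k))
      fun k hk => Quotient.sound ?_
    have h₀ : CutIso (d + 1 + k) (A.shiftTree ua 0) (B.shiftTree ub 0) := by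
      rw [shiftTree_zero, shiftTree_zero]
      exact CutIso.mono h (by lia)
    have := cutIso_shiftTree_add (hA.trans d.le_succ) (hB.trans d.le_succ) hua hub h₀
    rwa [zero_add] at this
  exact iso_of_forall_cutIso_shiftTree hA hB hua hub fun k =>
    Quotient.exact (congrFun eq_classes k)

/-- Let `a = t_{u_a}` and `b = t_{u_b}` be unroll trees of FDDS `A` and `B`
admitting periodic patterns of sizes `p_a` and `p_b`, and let
`n ≥ 2·max(p_a,p_b) + max(depth a, depth b)` (the depth of an unroll tree of an FDDS
being the depth of the FDDS). Then `a = b` (up to isomorphism) iff `a|_n = b|_n`. -/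
theorem stmt4 (A B : FDDS) (ua : A.S) (hua : A.Periodic ua) (ub : B.S) (hub : B.Periodic ub)
    (pa pb : ℕ) (hpa : A.PatternSize ua pa) (hpb : B.PatternSize ub pb)
    (n : ℕ) (hn : 2 * max pa pb + max A.depth B.depth ≤ n) :
    RTree.Iso (A.unrollTree ua) (B.unrollTree ub) ↔
      RTree.Iso ((A.unrollTree ua).tcut n) ((B.unrollTree ub).tcut n) := by
  exact stmt4_general A B ua hua ub hub pa pb hpa hpb n (by lia)
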